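/- For every complex number q with 0 < |q| < 1, one has ∑_{i,j,k,l ≥ 0} q^{i²+j²+k²+l²−ij−ik−il+jk+jl+i−j−k−l} / ((q;q)_i (q;q)_j (q;q)_k (q;q)_l) = 6 J_3³ / J_1³. -/

import Mathlib

open scoped BigOperators

/-- The infinite q-Pochhammer symbol `(a; q)_∞ = ∏_{k=0}^∞ (1 - a q^k)`. -/
noncomputable def qPochInf (a q : ℂ) : ℂ := ∏' n : ℕ, (1 - a * q ^ n)

/-- The finite q-Pochhammer symbol `(a; q)_n = ∏_{k=0}^{n-1} (1 - a q^k)`. -/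
noncomputable def qPoch (a q : ℂ) (n : ℕ) : ℂ :=
  Finset.prod (Finset.range n) (fun k => 1 - a * q ^ k)

/-- `J_m = (q^m; q^m)_∞`. -/
noncomputable def J (q : ℂ) (m : ℕ) : ℂ := qPochInf (q ^ m) (q ^ m)

/-- `J_{a,m} = (q^a; q^m)_∞ (q^{m-a}; q^m)_∞ (q^m; q^m)_∞`. -/
noncomputable def Jam (q : ℂ) (a m : ℕ) : ℂ :=
  qPochInf (q ^ a) (q ^ m) * qPochInf (q ^ (m - a)) (q ^ m) * qPochInf (q ^ m) (q ^ m)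

/-!
The quadratic form splits as `k l - l + i j + (d² + d a + a² + a)` with `d = k - l` and
`a = i - j - k`. Durfee rectangles show that `q ^ (k l) / ((q; q)_k (q; q)_l)` sums to
`1 / (q; q)_∞` along every diagonal `k - l = n`, so the sums over `(i, j)` and `(k, l)` with fixed
differences collapse to the theta series `∑ q ^ (d² + d a + a² + a)`, which the weight `q ^ (-l)`
doubles. This theta series consists of three equal sums over the cosets `d ≡ a + r (mod 3)`. Each
of them is the slice `a + b + c = 0` of the product of the triple products of base `q³` at `1`, `q`
and `q²`. The slice `a + b + c = N` is `q ^ (N choose 2)` times that one, so their sum is the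
triple product of base `q` at `1` times the theta series of a coset, while the product itself is an
explicit multiple of the same triple product.
-/

open Filter Topology

section GeneralSeries

lemma tendsto_tsum_of_tendsto_zero_succ {α E : Type*} [NormedAddCommGroup E] [CompleteSpace E]
    {l : Filter α} {F : α → ℕ → E} {L : E} {bound : ℕ → ℝ} (hbound : Summable bound)
    (h_le : ∀ x n, ‖F x n‖ ≤ bound n) (h_zero : Tendsto (F · 0) l (𝓝 L))
    (h_succ : ∀ n, Tendsto (F · (n + 1)) l (𝓝 0)) :
    Tendsto (fun x => ∑' n, F x n) l (𝓝 L) := by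
  rw [← tsum_pi_single (0 : ℕ) L]
  refine tendsto_tsum_of_dominated_convergence hbound (fun n => ?_) (.of_forall h_le)
  cases n with
  | zero => simpa using h_zero
  | succ n => simpa using h_succ n

lemma eq_of_tendsto_of_norm_sub_succ_le {E : Type*} [NormedAddCommGroup E] {u : ℕ → E} {L : E}
    (hu : Tendsto u atTop (𝓝 L))
    (h_le : ∀ n, ‖u n - u (n + 1)‖ ≤ ‖u (n + 1) - u (n + 2)‖) (n : ℕ) : u n = L := by
  have h_diff : Tendsto (fun n => ‖u n - u (n + 1)‖) atTop (𝓝 0) := by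
    simpa using (hu.sub ((tendsto_add_atTop_iff_nat 1).2 hu)).norm
  have h_succ (n : ℕ) : u n = u (n + 1) :=
    sub_eq_zero.1 (norm_le_zero_iff.1 ((monotone_nat_of_le_succ h_le).ge_of_tendsto h_diff n))
  have h_const (m : ℕ) : u (m + n) = u n := by
    induction m with
    | zero => simp
    | succ m ih => rw [← ih, h_succ (m + n), Nat.add_right_comm]
  exact tendsto_nhds_unique (tendsto_const_nhds.congr fun m => (h_const m).symm)
    ((tendsto_add_atTop_iff_nat n).2 hu)

lemma hasSum_mul_of_finiteDimensional {α β R : Type*} [NormedRing R] [NormedAlgebra ℝ R]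
    [FiniteDimensional ℝ R] {f : α → R} {g : β → R} {s t : R} (hf : HasSum f s)
    (hg : HasSum g t) :
    HasSum (fun x : α × β => f x.1 * g x.2) (s * t) :=
  hf.mul hg (summable_mul_of_summable_norm hf.summable.norm hg.summable.norm)

/-- The equivalence `(g, b) ↦ (b, g - φ b)`, which substitutes `g = h + φ b` in a double sum. -/
def shearEquiv {G β : Type*} [AddGroup G] (φ : β → G) : G × β ≃ β × G :=
  (Equiv.prodComm G β).trans (Equiv.prodShear (Equiv.refl β) fun b => Equiv.subRight (φ b))

@[simp]
lemma shearEquiv_apply {G β : Type*} [AddGroup G] (φ : β → G) (x : G × β) :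
    shearEquiv φ x = (x.2, x.1 - φ x.2) := rfl

end GeneralSeries

section Pochhammer

variable {a q : ℂ}

lemma norm_pow_lt_one (hq : ‖q‖ < 1) {m : ℕ} (hm : m ≠ 0) : ‖q ^ m‖ < 1 := by
  rw [norm_pow]
  exact pow_lt_one₀ (norm_nonneg q) hq hm

lemma one_sub_mul_pow_ne_zero (ha : ‖a‖ < 1) (hq : ‖q‖ < 1) (n : ℕ) : 1 - a * q ^ n ≠ 0 := by
  refine fun h => absurd (congrArg norm (sub_eq_zero.1 h)) (ne_of_gt ?_)
  rw [norm_mul, norm_pow, norm_one]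
  exact mul_lt_one_of_nonneg_of_lt_one_left (norm_nonneg a) ha
    (pow_le_one₀ (norm_nonneg q) hq.le)

lemma one_sub_pow_succ_ne_zero (hq : ‖q‖ < 1) (n : ℕ) : 1 - q ^ (n + 1) ≠ 0 := by
  simpa only [pow_succ'] using one_sub_mul_pow_ne_zero hq hq n

@[simp]
lemma qPoch_zero (a q : ℂ) : qPoch a q 0 = 1 := Finset.prod_range_zero _

lemma qPoch_succ (a q : ℂ) (n : ℕ) : qPoch a q (n + 1) = qPoch a q n * (1 - a * q ^ n) :=
  Finset.prod_range_succ _ n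

lemma qPoch_self_succ (q : ℂ) (n : ℕ) : qPoch q q (n + 1) = qPoch q q n * (1 - q ^ (n + 1)) := by
  rw [qPoch_succ, pow_succ']

lemma qPoch_ne_zero (ha : ‖a‖ < 1) (hq : ‖q‖ < 1) (n : ℕ) : qPoch a q n ≠ 0 :=
  Finset.prod_ne_zero_iff.2 fun k _ => one_sub_mul_pow_ne_zero ha hq k

lemma summable_norm_neg_mul_pow (a : ℂ) (hq : ‖q‖ < 1) :
    Summable fun n : ℕ => ‖-(a * q ^ n)‖ := by
  simpa only [norm_neg, norm_mul, norm_pow] using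
    (summable_geometric_of_lt_one (norm_nonneg q) hq).mul_left ‖a‖

lemma tendsto_qPoch_qPochInf (a : ℂ) (hq : ‖q‖ < 1) :
    Tendsto (qPoch a q) atTop (𝓝 (qPochInf a q)) := by
  have h := multipliable_one_add_of_summable (summable_norm_neg_mul_pow a hq)
  simp only [← sub_eq_add_neg] at h
  exact h.hasProd.tendsto_prod_nat

lemma qPochInf_ne_zero (hq : ‖q‖ < 1) (h : ∀ n : ℕ, 1 - a * q ^ n ≠ 0) : qPochInf a q ≠ 0 := by
  simp only [sub_eq_add_neg] at h
  simpa only [qPochInf, sub_eq_add_neg] using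
    tprod_one_add_ne_zero_of_summable h (summable_norm_neg_mul_pow a hq)

lemma qPochInf_ne_zero_of_norm_lt_one (ha : ‖a‖ < 1) (hq : ‖q‖ < 1) : qPochInf a q ≠ 0 :=
  qPochInf_ne_zero hq (one_sub_mul_pow_ne_zero ha hq)

lemma qPochInf_neg_one_ne_zero (hq : ‖q‖ < 1) : qPochInf (-1) q ≠ 0 := by
  refine qPochInf_ne_zero hq fun n => ?_
  cases n with
  | zero => norm_num
  | succ n =>
    simpa [pow_succ'] using one_sub_mul_pow_ne_zero (a := -q) (by rwa [norm_neg]) hq n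

lemma tendsto_inv_qPoch_self (hq : ‖q‖ < 1) :
    Tendsto (fun n => (qPoch q q n)⁻¹) atTop (𝓝 (qPochInf q q)⁻¹) :=
  (tendsto_qPoch_qPochInf q hq).inv₀ (qPochInf_ne_zero_of_norm_lt_one hq hq)

lemma exists_norm_inv_qPoch_self_le (hq : ‖q‖ < 1) : ∃ C : ℝ, ∀ n, ‖(qPoch q q n)⁻¹‖ ≤ C := by
  obtain ⟨C, hC⟩ :=
    (Metric.isBounded_range_of_tendsto _ (tendsto_inv_qPoch_self hq)).exists_norm_le
  exact ⟨C, fun n => hC _ ⟨n, rfl⟩⟩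

lemma qPoch_mul_eq_prod (a q : ℂ) (m n : ℕ) :
    qPoch a q (m * n) = ∏ r ∈ Finset.range m, qPoch (a * q ^ r) (q ^ m) n := by
  induction n with
  | zero => simp
  | succ n ih =>
    simp only [qPoch_succ, Finset.prod_mul_distrib, ← ih]
    rw [qPoch, Nat.mul_succ, Finset.prod_range_add, ← qPoch]
    congr 1
    refine Finset.prod_congr rfl fun r _ => ?_
    ring

lemma qPochInf_eq_prod (a : ℂ) (hq : ‖q‖ < 1) {m : ℕ} (hm : m ≠ 0) :
    qPochInf a q = ∏ r ∈ Finset.range m, qPochInf (a * q ^ r) (q ^ m) := by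
  have h_mul : Tendsto (fun n => m * n) atTop atTop :=
    tendsto_id.const_mul_atTop' (Nat.pos_of_ne_zero hm)
  refine tendsto_nhds_unique ((tendsto_qPoch_qPochInf a hq).comp h_mul) ?_
  simp only [Function.comp_def, qPoch_mul_eq_prod]
  exact tendsto_finsetProd _ fun r _ => tendsto_qPoch_qPochInf _ (norm_pow_lt_one hq hm)

end Pochhammer

section Durfee

variable {q : ℂ}

/-- The generating function `q ^ (k l) / ((q; q)_k (q; q)_l)` of the partitions with a prescribed
`k × l` Durfee rectangle, as a function of the pair `(k, l)`. -/
noncomputable def durfeeTerm (q : ℂ) (p : ℕ × ℕ) : ℂ :=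
  q ^ (p.1 * p.2) / (qPoch q q p.1 * qPoch q q p.2)

lemma durfeeTerm_swap (q : ℂ) (p : ℕ × ℕ) : durfeeTerm q p.swap = durfeeTerm q p := by
  simp only [durfeeTerm, Prod.fst_swap, Prod.snd_swap, mul_comm]

lemma durfeeTerm_succ_right (hq : ‖q‖ < 1) (k l : ℕ) :
    durfeeTerm q (k, l + 1) * (1 - q ^ (l + 1)) = q ^ k * durfeeTerm q (k, l) := by
  have := one_sub_pow_succ_ne_zero hq l
  have := qPoch_ne_zero hq hq k
  have := qPoch_ne_zero hq hq l
  simp only [durfeeTerm, qPoch_self_succ]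
  field_simp
  ring

lemma durfeeTerm_zero_right_recurrence (hq : ‖q‖ < 1) (n : ℕ) :
    durfeeTerm q (n, 0) = (1 - q ^ (n + 1)) * durfeeTerm q (n + 1, 0) := by
  have := one_sub_pow_succ_ne_zero hq n
  have := qPoch_ne_zero hq hq n
  simp only [durfeeTerm, qPoch_self_succ]
  field_simp
  simp

lemma durfeeTerm_succ_right_recurrence (hq : ‖q‖ < 1) (n j : ℕ) :
    durfeeTerm q (j + 1 + n, j + 1) =
      (1 - q ^ (n + 1)) * durfeeTerm q (j + 1 + (n + 1), j + 1) +
        q ^ (n + 1) * durfeeTerm q (j + (n + 2), j) := by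
  have := one_sub_pow_succ_ne_zero hq j
  have := one_sub_pow_succ_ne_zero hq (j + 1 + n)
  have := qPoch_ne_zero hq hq j
  have := qPoch_ne_zero hq hq (j + 1 + n)
  simp only [durfeeTerm, show j + (n + 2) = j + 1 + n + 1 by ring, ← add_assoc (j + 1) n 1,
    qPoch_self_succ]
  field_simp
  ring

lemma exists_norm_durfeeTerm_le (hq : ‖q‖ < 1) :
    ∃ C : ℝ, ∀ p : ℕ × ℕ, ‖durfeeTerm q p‖ ≤ ‖q‖ ^ min p.1 p.2 * C := by
  obtain ⟨C, hC⟩ := exists_norm_inv_qPoch_self_le hq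
  have hC_nonneg : 0 ≤ C := (norm_nonneg _).trans (hC 0)
  refine ⟨C * C, fun ⟨k, l⟩ => ?_⟩
  have h_min : min k l ≤ k * l := by
    rcases Nat.eq_zero_or_pos k with rfl | hk
    · simp
    · exact (min_le_right k l).trans (Nat.le_mul_of_pos_left l hk)
  rw [durfeeTerm, div_eq_mul_inv, mul_inv, norm_mul, norm_mul, norm_pow]
  exact mul_le_mul (pow_le_pow_of_le_one (norm_nonneg q) hq.le h_min)
    (mul_le_mul (hC k) (hC l) (norm_nonneg _) hC_nonneg) (by positivity) (by positivity)

lemma exists_summable_norm_durfeeTerm_le (hq : ‖q‖ < 1) :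
    ∃ b : ℕ → ℝ, Summable b ∧ ∀ p : ℕ × ℕ, ‖durfeeTerm q p‖ ≤ b (min p.1 p.2) := by
  obtain ⟨C, hC⟩ := exists_norm_durfeeTerm_le hq
  exact ⟨_, (summable_geometric_of_lt_one (norm_nonneg q) hq).mul_right C, hC⟩

lemma tendsto_tsum_durfeeTerm (hq : ‖q‖ < 1) :
    Tendsto (fun n => ∑' j, durfeeTerm q (j + n, j)) atTop (𝓝 (qPochInf q q)⁻¹) := by
  obtain ⟨b, hb, h_le⟩ := exists_summable_norm_durfeeTerm_le hq
  refine tendsto_tsum_of_tendsto_zero_succ hb (fun n j => by simpa using h_le (j + n, j)) ?_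
    fun j => ?_
  · simpa [durfeeTerm] using tendsto_inv_qPoch_self hq
  · have h_shift : Tendsto (fun n => j + 1 + n) atTop atTop :=
      tendsto_atTop_mono (fun n => Nat.le_add_left n (j + 1)) tendsto_id
    have h_pow : Tendsto (fun n => q ^ ((j + 1 + n) * (j + 1))) atTop (𝓝 0) :=
      (tendsto_pow_atTop_nhds_zero_of_norm_lt_one hq).comp
        (h_shift.atTop_mul_const' j.succ_pos)
    have h_inv := ((tendsto_inv_qPoch_self hq).comp h_shift).mul_const (qPoch q q (j + 1))⁻¹
    simpa only [durfeeTerm, div_eq_mul_inv, mul_inv, zero_mul, Function.comp_apply] using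
      h_pow.mul h_inv

lemma hasSum_durfeeTerm (hq : ‖q‖ < 1) (n : ℕ) :
    HasSum (fun j => durfeeTerm q (j + n, j)) (qPochInf q q)⁻¹ := by
  obtain ⟨b, hb, h_le⟩ := exists_summable_norm_durfeeTerm_le hq
  have h_summable (n : ℕ) : Summable fun j => durfeeTerm q (j + n, j) :=
    .of_norm_bounded hb fun j => by simpa using h_le (j + n, j)
  set S : ℕ → ℂ := fun n => ∑' j, durfeeTerm q (j + n, j) with hS
  have h_rec (n : ℕ) : S n = (1 - q ^ (n + 1)) * S (n + 1) + q ^ (n + 1) * S (n + 2) := by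
    have h_tail := (((h_summable (n + 1)).comp_injective (add_left_injective 1)).mul_left
      (1 - q ^ (n + 1))).tsum_add ((h_summable (n + 2)).mul_left (q ^ (n + 1)))
    simp only [hS, (h_summable n).tsum_eq_zero_add, (h_summable (n + 1)).tsum_eq_zero_add,
      durfeeTerm_succ_right_recurrence hq n, zero_add,
      durfeeTerm_zero_right_recurrence hq n]
    simp only [Function.comp_apply, tsum_mul_left] at h_tail
    rw [h_tail]
    ring
  suffices h : S n = (qPochInf q q)⁻¹ from h ▸ (h_summable n).hasSum
  refine eq_of_tendsto_of_norm_sub_succ_le (tendsto_tsum_durfeeTerm hq) (fun n => ?_) n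
  calc ‖S n - S (n + 1)‖ = ‖-q ^ (n + 1) * (S (n + 1) - S (n + 2))‖ := by
        rw [h_rec n]
        ring_nf
    _ ≤ ‖S (n + 1) - S (n + 2)‖ := by
        rw [norm_mul, norm_neg]
        exact mul_le_of_le_one_left (norm_nonneg _) (norm_pow_lt_one hq n.succ_ne_zero).le

/-- The decomposition of `ℕ × ℕ` into the diagonals `k - l = n` for `n : ℤ`, the points of each
diagonal being numbered by `m = min k l`. -/
def diagonalEquiv : ℤ × ℕ ≃ ℕ × ℕ where
  toFun x := (x.2 + x.1.toNat, x.2 + (-x.1).toNat)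
  invFun p := ((p.1 : ℤ) - p.2, min p.1 p.2)
  left_inv x := by ext <;> dsimp only <;> omega
  right_inv p := by ext <;> dsimp only <;> omega

@[simp]
lemma diagonalEquiv_fst_sub_snd (x : ℤ × ℕ) :
    ((diagonalEquiv x).1 : ℤ) - (diagonalEquiv x).2 = x.1 :=
  congrArg Prod.fst (diagonalEquiv.symm_apply_apply x)

@[simp]
lemma min_diagonalEquiv (x : ℤ × ℕ) : min (diagonalEquiv x).1 (diagonalEquiv x).2 = x.2 :=
  congrArg Prod.snd (diagonalEquiv.symm_apply_apply x)

lemma hasSum_durfeeTerm_diagonalEquiv (hq : ‖q‖ < 1) (n : ℤ) :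
    HasSum (fun m => durfeeTerm q (diagonalEquiv (n, m))) (qPochInf q q)⁻¹ := by
  obtain ⟨n, rfl | rfl⟩ := n.eq_nat_or_neg
  · simpa [diagonalEquiv] using hasSum_durfeeTerm hq n
  · simpa [diagonalEquiv, ← durfeeTerm_swap q (_, _ + n)] using hasSum_durfeeTerm hq n

lemma hasSum_of_hasSum_durfeeTerm_mul (hq : ‖q‖ < 1) {g : ℤ → ℂ} {s : ℂ}
    (h : HasSum (fun p : ℕ × ℕ => durfeeTerm q p * g (p.1 - p.2)) s) :
    HasSum g (s * qPochInf q q) := by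
  have h_diag := (diagonalEquiv.hasSum_iff.2 h).prod_fiberwise fun n => by
    simpa using (hasSum_durfeeTerm_diagonalEquiv hq n).mul_right (g n)
  simpa [mul_comm _ (qPochInf q q), qPochInf_ne_zero_of_norm_lt_one hq hq] using
    h_diag.mul_left (qPochInf q q)

/-- `diagonalEquiv` with a parameter in `β` carried along. -/
def diagonalProdEquiv (β : Type*) : (ℤ × β) × ℕ ≃ (ℕ × ℕ) × β where
  toFun x := (diagonalEquiv (x.1.1, x.2), x.1.2)
  invFun y := (((diagonalEquiv.symm y.1).1, y.2), (diagonalEquiv.symm y.1).2)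
  left_inv x := by simp
  right_inv y := by simp

lemma hasSum_durfeeTerm_mul (hq : ‖q‖ < 1) {β : Type*} {g : ℤ × β → ℂ} {s : ℂ}
    (hg : HasSum g s) :
    HasSum (fun x : (ℕ × ℕ) × β => durfeeTerm q x.1 * g (x.1.1 - x.1.2, x.2))
      (s / qPochInf q q) := by
  obtain ⟨b, hb, h_le⟩ := exists_summable_norm_durfeeTerm_le hq
  rw [← (diagonalProdEquiv β).hasSum_iff]
  simp only [Function.comp_def, diagonalProdEquiv, Equiv.coe_fn_mk, diagonalEquiv_fst_sub_snd]
  have h_bound : Summable fun x : (ℤ × β) × ℕ => ‖g x.1‖ * b x.2 :=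
    hg.summable.norm.mul_of_nonneg hb (fun _ => norm_nonneg _) fun m => by
      simpa using (norm_nonneg _).trans (h_le (m, m))
  have h_summable : Summable fun x : (ℤ × β) × ℕ =>
      durfeeTerm q (diagonalEquiv (x.1.1, x.2)) * g x.1 :=
    .of_norm_bounded h_bound fun x => by
      rw [norm_mul, mul_comm]
      gcongr
      simpa using h_le (diagonalEquiv (x.1.1, x.2))
  have h_fiber := h_summable.hasSum.prod_fiberwise fun x =>
    (hasSum_durfeeTerm_diagonalEquiv hq x.1).mul_right (g x)
  rw [div_eq_inv_mul, ← h_fiber.unique (hg.mul_left _)]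
  exact h_summable.hasSum

lemma durfeeTerm_mul_zpow_neg_succ (hq0 : q ≠ 0) (hq : ‖q‖ < 1) (k l : ℕ) :
    durfeeTerm q (k, l + 1) * (q ^ (-((l + 1 : ℕ) : ℤ)) - 1) =
      durfeeTerm q (k, l) * q ^ ((k : ℤ) - (l + 1 : ℕ)) := by
  rw [zpow_sub₀ hq0, zpow_neg, zpow_natCast, zpow_natCast]
  field_simp
  linear_combination durfeeTerm_succ_right hq k l

/- The factor `q ^ (-l) - 1` vanishes for `l = 0`, and for positive `l` it turns the summand into
the unweighted one at `(k, l - 1)`, which lies on the next diagonal. -/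
lemma hasSum_durfeeTerm_mul_zpow_neg (hq0 : q ≠ 0) (hq : ‖q‖ < 1) {β : Type*} {g : ℤ × β → ℂ}
    {s t : ℂ} (hg : HasSum g s) (hg' : HasSum (fun x => q ^ x.1 * g x) t) :
    HasSum (fun x : (ℕ × ℕ) × β =>
        durfeeTerm q x.1 * q ^ (-(x.1.2 : ℤ)) * g (x.1.1 - x.1.2, x.2))
      ((s + t) / qPochInf q q) := by
  let succRight : (ℕ × ℕ) × β → (ℕ × ℕ) × β := fun x => ((x.1.1, x.1.2 + 1), x.2)
  have h_injective : Function.Injective succRight := by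
    rintro ⟨⟨k, l⟩, y⟩ ⟨⟨k', l'⟩, y'⟩ h
    simpa [succRight] using h
  have h_diff : HasSum (fun x : (ℕ × ℕ) × β =>
      durfeeTerm q x.1 * (q ^ (-(x.1.2 : ℤ)) - 1) * g (x.1.1 - x.1.2, x.2))
      (t / qPochInf q q) := by
    rw [← h_injective.hasSum_iff]
    · have h_shift : HasSum (fun x : ℤ × β => q ^ (x.1 - 1) * g (x.1 - 1, x.2)) t :=
        ((Equiv.subRight (1 : ℤ)).prodCongr (Equiv.refl β)).hasSum_iff.2 hg'
      refine (hasSum_durfeeTerm_mul hq h_shift).congr_fun fun x => ?_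
      simp only [Function.comp_apply, succRight, durfeeTerm_mul_zpow_neg_succ hq0 hq]
      push_cast
      simp only [sub_add_eq_sub_sub, mul_assoc]
    · rintro ⟨⟨k, _ | l⟩, y⟩ hx
      · simp
      · exact (hx ⟨((k, l), y), rfl⟩).elim
  rw [add_div]
  refine ((hasSum_durfeeTerm_mul hq hg).add h_diff).congr_fun fun x => ?_
  ring

end Durfee

section TripleProduct

variable {q : ℂ}

/-- The summand `q ^ (i choose 2) z ^ i / (q; q)_i` of Euler's expansion of `(-z; q)_∞`. -/
noncomputable def eulerTerm (q z : ℂ) (i : ℕ) : ℂ := q ^ i.choose 2 * z ^ i / qPoch q q i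

lemma eulerTerm_succ (hq : ‖q‖ < 1) (z : ℂ) (i : ℕ) :
    eulerTerm q z (i + 1) * (1 - q ^ (i + 1)) = z * q ^ i * eulerTerm q z i := by
  have := one_sub_pow_succ_ne_zero hq i
  have := qPoch_ne_zero hq hq i
  simp only [eulerTerm, qPoch_self_succ, Nat.choose_succ_succ' i 1, Nat.choose_one_right]
  field_simp
  ring

lemma eulerTerm_mul (q z w : ℂ) (i : ℕ) : eulerTerm q (z * w) i = w ^ i * eulerTerm q z i := by
  rw [eulerTerm, eulerTerm]
  ring

lemma summable_eulerTerm (hq : ‖q‖ < 1) (z : ℂ) : Summable (eulerTerm q z) := by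
  have h_pow := tendsto_pow_atTop_nhds_zero_of_norm_lt_one hq
  have h_ratio : Tendsto (fun i => ‖z * q ^ i / (1 - q ^ (i + 1))‖) atTop (𝓝 0) := by
    simpa using ((h_pow.const_mul z).div
      (tendsto_const_nhds.sub ((tendsto_add_atTop_iff_nat 1).2 h_pow)) (by simp)).norm
  refine summable_of_ratio_norm_eventually_le one_half_lt_one ?_
  filter_upwards [h_ratio.eventually_le_const one_half_pos] with i hi
  have h_succ : eulerTerm q z (i + 1) = z * q ^ i / (1 - q ^ (i + 1)) * eulerTerm q z i := by
    rw [div_mul_eq_mul_div, ← eulerTerm_succ hq z i,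
      mul_div_cancel_right₀ _ (one_sub_pow_succ_ne_zero hq i)]
  rw [h_succ, norm_mul]
  gcongr

lemma tsum_eulerTerm_eq_one_add_mul (hq : ‖q‖ < 1) (z : ℂ) :
    ∑' i, eulerTerm q z i = (1 + z) * ∑' i, eulerTerm q (z * q) i := by
  have h_succ (i : ℕ) :
      eulerTerm q z (i + 1) = eulerTerm q (z * q) (i + 1) + z * eulerTerm q (z * q) i := by
    rw [eulerTerm_mul, eulerTerm_mul]
    linear_combination eulerTerm_succ hq z i
  have h_summable := summable_eulerTerm hq (z * q)
  rw [(summable_eulerTerm hq z).tsum_eq_zero_add, tsum_congr h_succ,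
    ((summable_nat_add_iff 1).2 h_summable).tsum_add (h_summable.mul_left z), tsum_mul_left,
    add_mul, one_mul, h_summable.tsum_eq_zero_add]
  simp only [eulerTerm, pow_zero]
  ring

lemma tendsto_tsum_eulerTerm_mul_pow (hq : ‖q‖ < 1) (z : ℂ) :
    Tendsto (fun n => ∑' i, eulerTerm q (z * q ^ n) i) atTop (𝓝 1) := by
  refine tendsto_tsum_of_tendsto_zero_succ (summable_eulerTerm hq z).norm (fun n i => ?_) ?_
    fun i => ?_
  · rw [eulerTerm_mul, norm_mul]
    refine mul_le_of_le_one_left (norm_nonneg _) ?_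
    simpa only [norm_pow] using
      pow_le_one₀ (by positivity) (pow_le_one₀ (norm_nonneg q) hq.le)
  · simp [eulerTerm]
  · simpa only [eulerTerm_mul, zero_pow i.succ_ne_zero, zero_mul] using
      ((tendsto_pow_atTop_nhds_zero_of_norm_lt_one hq).pow (i + 1)).mul_const
        (eulerTerm q z (i + 1))

lemma hasSum_eulerTerm (hq : ‖q‖ < 1) (z : ℂ) : HasSum (eulerTerm q z) (qPochInf (-z) q) := by
  have h_iterate (n : ℕ) :
      ∑' i, eulerTerm q z i = qPoch (-z) q n * ∑' i, eulerTerm q (z * q ^ n) i := by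
    induction n with
    | zero => simp
    | succ n ih =>
      rw [ih, qPoch_succ, tsum_eulerTerm_eq_one_add_mul hq (z * q ^ n)]
      ring_nf
  have h_lim := (tendsto_qPoch_qPochInf (-z) hq).mul (tendsto_tsum_eulerTerm_mul_pow hq z)
  rw [← mul_one (qPochInf (-z) q),
    ← tendsto_nhds_unique (tendsto_const_nhds.congr h_iterate) h_lim]
  exact (summable_eulerTerm hq z).hasSum

lemma ringChoose_two_succ (n : ℤ) : Ring.choose (n + 1) 2 = n + Ring.choose n 2 := by
  simp [Ring.choose_succ_succ]

lemma two_mul_ringChoose_two (n : ℤ) : 2 * Ring.choose n 2 = n * (n - 1) := by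
  induction n using Int.induction_on with
  | zero => simp [Ring.choose_zero_succ]
  | succ n ih =>
    rw [ringChoose_two_succ]
    linarith
  | pred n ih =>
    have h := ringChoose_two_succ (-n - 1)
    rw [sub_add_cancel] at h
    linarith

lemma choose_two_add_choose_two (k l : ℕ) :
    (k.choose 2 + (l.choose 2 + l) : ℤ) = Ring.choose (k - l : ℤ) 2 + k * l := by
  have hk := two_mul_ringChoose_two k
  have hl := two_mul_ringChoose_two l
  have hkl := two_mul_ringChoose_two (k - l)
  rw [Ring.choose_natCast] at hk hl
  linarith

lemma eulerTerm_mul_eulerTerm (hq0 : q ≠ 0) {w : ℂ} (hw : w ≠ 0) (k l : ℕ) :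
    eulerTerm q w k * eulerTerm q (q / w) l =
      durfeeTerm q (k, l) * (q ^ Ring.choose (k - l : ℤ) 2 * w ^ (k - l : ℤ)) := by
  have h_pow : q ^ k.choose 2 * (q ^ l.choose 2 * q ^ l) =
      q ^ Ring.choose (k - l : ℤ) 2 * q ^ (k * l) := by
    simp only [← zpow_natCast, ← zpow_add₀ hq0]
    push_cast
    rw [choose_two_add_choose_two]
  rw [zpow_sub₀ hw, zpow_natCast, zpow_natCast]
  simp only [eulerTerm, durfeeTerm, div_pow]
  linear_combination w ^ k / (w ^ l * qPoch q q k * qPoch q q l) * h_pow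

/-- The triple product `(-w; q)_∞ (-q/w; q)_∞ (q; q)_∞`. -/
noncomputable def tripleProduct (w q : ℂ) : ℂ :=
  qPochInf (-w) q * qPochInf (-(q / w)) q * qPochInf q q

theorem hasSum_tripleProduct (hq0 : q ≠ 0) (hq : ‖q‖ < 1) {w : ℂ} (hw : w ≠ 0) :
    HasSum (fun n : ℤ => q ^ Ring.choose n 2 * w ^ n) (tripleProduct w q) := by
  refine hasSum_of_hasSum_durfeeTerm_mul hq ?_
  simpa only [eulerTerm_mul_eulerTerm hq0 hw] using
    hasSum_mul_of_finiteDimensional (hasSum_eulerTerm hq w) (hasSum_eulerTerm hq (q / w))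

lemma tripleProduct_one_ne_zero (hq : ‖q‖ < 1) : tripleProduct 1 q ≠ 0 := by
  have h_neg : qPochInf (-q) q ≠ 0 := qPochInf_ne_zero_of_norm_lt_one (by rwa [norm_neg]) hq
  rw [tripleProduct, div_one]
  exact mul_ne_zero (mul_ne_zero (qPochInf_neg_one_ne_zero hq) h_neg)
    (qPochInf_ne_zero_of_norm_lt_one hq hq)

lemma prod_tripleProduct_mul_qPochInf (hq0 : q ≠ 0) (hq : ‖q‖ < 1) (w : ℂ) {m : ℕ} (hm : m ≠ 0) :
    (∏ r ∈ Finset.range m, tripleProduct (w * q ^ r) (q ^ m)) * qPochInf q q =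
      tripleProduct w q * qPochInf (q ^ m) (q ^ m) ^ m := by
  have h_reflect : ∏ r ∈ Finset.range m, qPochInf (-(q ^ m / (w * q ^ r))) (q ^ m) =
      qPochInf (-(q / w)) q := by
    rw [qPochInf_eq_prod _ hq hm, ← Finset.prod_range_reflect]
    refine Finset.prod_congr rfl fun r hr => ?_
    have h_pow : q ^ m = q * q ^ (m - 1 - r) * q ^ r := by
      rw [← pow_succ', ← pow_add]
      congr 1
      have := Finset.mem_range.1 hr
      omega
    congr 1
    rw [h_pow]
    field_simp
  simp only [tripleProduct, Finset.prod_mul_distrib, Finset.prod_const, Finset.card_range,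
    h_reflect, qPochInf_eq_prod (-w) hq hm, neg_mul]
  ring

end TripleProduct

section CubicTheta

variable {q : ℂ}

/-- The exponent of `q` in the term `(a, b, c)`, where `a = N - (b + c)` and `x = (b, c)`, of the
product of the triple products of base `q³` at `1`, `q` and `q²`. -/
def sliceExponent (N : ℤ) (x : ℤ × ℤ) : ℤ :=
  3 * Ring.choose x.1 2 + x.1 + (3 * Ring.choose x.2 2 + 2 * x.2) +
    3 * Ring.choose (N - (x.1 + x.2)) 2

/-- `hexagonalExponent` on the coset `d ≡ a (mod 3)`, in the parametrization `hexagonalCoset`. -/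
def cubicExponent (x : ℤ × ℤ) : ℤ := 3 * (x.1 ^ 2 + x.1 * x.2 + x.2 ^ 2) + x.1 + 2 * x.2

lemma sliceExponent_zero (x : ℤ × ℤ) : sliceExponent 0 x = cubicExponent x := by
  have h₁ := two_mul_ringChoose_two x.1
  have h₂ := two_mul_ringChoose_two x.2
  have h₃ := two_mul_ringChoose_two (0 - (x.1 + x.2))
  rw [sliceExponent, cubicExponent]
  linarith

/-- The map `(a, b, c) ↦ (c + 1, a, b)` from the slice `a + b + c = N` to the slice `N + 1`, both
slices being parametrized by `(b, c)`. -/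
def sliceRotation (N : ℤ) : ℤ × ℤ ≃ ℤ × ℤ where
  toFun x := (N - (x.1 + x.2), x.1)
  invFun y := (y.2, N - (y.1 + y.2))
  left_inv _ := Prod.ext rfl (by dsimp only; ring)
  right_inv _ := Prod.ext (by dsimp only; ring) rfl

lemma sliceExponent_sliceRotation (N : ℤ) (x : ℤ × ℤ) :
    sliceExponent (N + 1) (sliceRotation N x) = N + sliceExponent N x := by
  simp only [sliceExponent, sliceRotation, Equiv.coe_fn_mk]
  rw [show N + 1 - (N - (x.1 + x.2) + x.1) = x.2 + 1 by ring, ringChoose_two_succ]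
  ring

lemma hasSum_zpow_sliceExponent_succ_iff (hq0 : q ≠ 0) (N : ℤ) {s : ℂ} :
    HasSum (fun x => q ^ sliceExponent (N + 1) x) (q ^ N * s) ↔
      HasSum (fun x => q ^ sliceExponent N x) s := by
  rw [← (sliceRotation N).hasSum_iff]
  simp only [Function.comp_def, sliceExponent_sliceRotation, zpow_add₀ hq0]
  exact hasSum_mul_left_iff (zpow_ne_zero N hq0)

lemma hasSum_zpow_sliceExponent (hq0 : q ≠ 0) {s : ℂ}
    (h : HasSum (fun x => q ^ cubicExponent x) s) (N : ℤ) :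
    HasSum (fun x => q ^ sliceExponent N x) (q ^ Ring.choose N 2 * s) := by
  induction N using Int.induction_on with
  | zero => simpa [sliceExponent_zero, Ring.choose_zero_succ] using h
  | succ N ih =>
    rw [ringChoose_two_succ, zpow_add₀ hq0, mul_assoc]
    exact (hasSum_zpow_sliceExponent_succ_iff hq0 N).2 ih
  | pred N ih =>
    rw [← hasSum_zpow_sliceExponent_succ_iff hq0, ← mul_assoc, ← zpow_add₀ hq0,
      ← ringChoose_two_succ, sub_add_cancel]
    exact ih

lemma hasSum_zpow_sliceExponent_prod (hq0 : q ≠ 0) (hq : ‖q‖ < 1) :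
    HasSum (fun x : ℤ × ℤ × ℤ => q ^ sliceExponent x.1 x.2)
      (∏ r ∈ Finset.range 3, tripleProduct (1 * q ^ r) (q ^ 3)) := by
  have hq3 : ‖q ^ 3‖ < 1 := norm_pow_lt_one hq three_ne_zero
  have h_theta (r : ℕ) : HasSum (fun n : ℤ => q ^ (3 * Ring.choose n 2 + r * n))
      (tripleProduct (q ^ r) (q ^ 3)) := by
    refine (hasSum_tripleProduct (pow_ne_zero 3 hq0) hq3 (pow_ne_zero r hq0)).congr_fun fun n => ?_
    rw [zpow_add₀ hq0, zpow_mul, zpow_mul, zpow_natCast, zpow_ofNat]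
  have h_prod := hasSum_mul_of_finiteDimensional
    (hasSum_mul_of_finiteDimensional (h_theta 1) (h_theta 2)) (h_theta 0)
  simp only [Finset.prod_range_succ, Finset.prod_range_zero, one_mul]
  rw [mul_assoc, mul_comm]
  refine ((shearEquiv fun x : ℤ × ℤ => x.1 + x.2).hasSum_iff.2 h_prod).congr_fun fun x => ?_
  simp [sliceExponent, zpow_add₀ hq0]

theorem hasSum_zpow_cubicExponent (hq0 : q ≠ 0) (hq : ‖q‖ < 1) :
    HasSum (fun x => q ^ cubicExponent x) (qPochInf (q ^ 3) (q ^ 3) ^ 3 / qPochInf q q) := by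
  have h_prod := hasSum_zpow_sliceExponent_prod hq0 hq
  have h_slice : HasSum (fun x => q ^ cubicExponent x) (∑' x, q ^ cubicExponent x) := by
    simpa only [sliceExponent_zero] using (h_prod.summable.prod_factor 0).hasSum
  have h_theta : HasSum (fun N : ℤ => q ^ Ring.choose N 2) (tripleProduct 1 q) := by
    simpa using hasSum_tripleProduct hq0 hq one_ne_zero
  have h_eq := (h_prod.prod_fiberwise (hasSum_zpow_sliceExponent hq0 h_slice)).unique
    (h_theta.mul_right _)
  have h_split := prod_tripleProduct_mul_qPochInf hq0 hq 1 three_ne_zero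
  rw [h_eq, mul_assoc] at h_split
  rwa [← mul_left_cancel₀ (tripleProduct_one_ne_zero hq) h_split,
    mul_div_cancel_right₀ _ (qPochInf_ne_zero_of_norm_lt_one hq hq)]

/-- The exponent `m² + m n + n² + m + n` of the cubic theta function `q ^ (-1/3) c(q)` of the
Borweins, in the variables `(d, a) = (-m, -n - 1)`. -/
def hexagonalExponent (x : ℤ × ℤ) : ℤ := x.1 ^ 2 + x.1 * x.2 + x.2 ^ 2 + x.2

/-- Parametrizations of the cosets `d ≡ a + r (mod 3)` of the hexagonal lattice. They are obtained
from that of the first coset by the rotation `(d, a) ↦ (-d - a, d - 1)`, which preserves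
`hexagonalExponent`. -/
def hexagonalCoset : Fin 3 × ℤ × ℤ → ℤ × ℤ
  | (0, n, p) => (n - p, n + 2 * p)
  | (1, n, p) => (-2 * n - p, n - p - 1)
  | (2, n, p) => (n + 2 * p + 1, -2 * n - p - 1)

lemma hexagonalExponent_hexagonalCoset (x : Fin 3 × ℤ × ℤ) :
    hexagonalExponent (hexagonalCoset x) = cubicExponent x.2 := by
  obtain ⟨r, n, p⟩ := x
  fin_cases r <;> simp only [hexagonalCoset, hexagonalExponent, cubicExponent] <;> ring

lemma hexagonalCoset_bijective : Function.Bijective hexagonalCoset := by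
  constructor
  · rintro ⟨r, n, p⟩ ⟨r', n', p'⟩ h
    fin_cases r <;> fin_cases r' <;>
      simp only [hexagonalCoset, Prod.mk.injEq, true_and] at h ⊢ <;> omega
  · rintro ⟨d, a⟩
    obtain ⟨t, h | h | h⟩ : ∃ t, a - d = 3 * t ∨ a - d = 3 * t - 1 ∨ a - d = 3 * t - 2 :=
      ⟨(a - d + 2) / 3, by omega⟩
    · exact ⟨(0, d + t, t), by ext <;> simp only [hexagonalCoset] <;> omega⟩
    · exact ⟨(1, t, -d - 2 * t), by ext <;> simp only [hexagonalCoset] <;> omega⟩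
    · exact ⟨(2, 1 - d - 2 * t, d + t - 1), by ext <;> simp only [hexagonalCoset] <;> omega⟩

theorem hasSum_zpow_hexagonalExponent (hq0 : q ≠ 0) (hq : ‖q‖ < 1) :
    HasSum (fun x => q ^ hexagonalExponent x)
      (3 * (qPochInf (q ^ 3) (q ^ 3) ^ 3 / qPochInf q q)) := by
  rw [← (Equiv.ofBijective _ hexagonalCoset_bijective).hasSum_iff]
  simpa [Function.comp_def, hexagonalExponent_hexagonalCoset] using
    hasSum_mul_of_finiteDimensional (hasSum_fintype fun _ : Fin 3 => (1 : ℂ))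
      (hasSum_zpow_cubicExponent hq0 hq)

/-- The reflection `(d, a) ↦ (-d, d + a)` of the hexagonal lattice. -/
def hexagonalReflection : ℤ × ℤ ≃ ℤ × ℤ where
  toFun x := (-x.1, x.1 + x.2)
  invFun x := (-x.1, x.1 + x.2)
  left_inv x := by ext <;> simp
  right_inv x := by ext <;> simp

lemma hexagonalExponent_hexagonalReflection (x : ℤ × ℤ) :
    hexagonalExponent (hexagonalReflection x) = x.1 + hexagonalExponent x := by
  simp only [hexagonalExponent, hexagonalReflection, Equiv.coe_fn_mk]
  ring

lemma hasSum_zpow_fst_mul_zpow_hexagonalExponent (hq0 : q ≠ 0) {s : ℂ}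
    (h : HasSum (fun x => q ^ hexagonalExponent x) s) :
    HasSum (fun x : ℤ × ℤ => q ^ x.1 * q ^ hexagonalExponent x) s := by
  simpa only [Function.comp_def, hexagonalExponent_hexagonalReflection, zpow_add₀ hq0] using
    hexagonalReflection.hasSum_iff.2 h

end CubicTheta

section QuadrupleSum

variable {q : ℂ}

theorem hasSum_durfeeTerm_mul_durfeeTerm_mul_zpow (hq0 : q ≠ 0) (hq : ‖q‖ < 1) :
    HasSum (fun x : (ℕ × ℕ) × ℕ × ℕ => durfeeTerm q x.1 *
        (durfeeTerm q x.2 * q ^ (-(x.2.2 : ℤ)) *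
          q ^ hexagonalExponent (x.2.1 - x.2.2, x.1.1 - x.1.2 - x.2.1)))
      (6 * qPochInf (q ^ 3) (q ^ 3) ^ 3 / qPochInf q q ^ 3) := by
  have h_hex := hasSum_zpow_hexagonalExponent hq0 hq
  have h_inner := hasSum_durfeeTerm_mul_zpow_neg hq0 hq h_hex
    (hasSum_zpow_fst_mul_zpow_hexagonalExponent hq0 h_hex)
  have h_outer := hasSum_durfeeTerm_mul hq
    ((shearEquiv fun p : ℕ × ℕ => (p.1 : ℤ)).hasSum_iff.2 h_inner)
  have := qPochInf_ne_zero_of_norm_lt_one hq hq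
  have h_value : 6 * qPochInf (q ^ 3) (q ^ 3) ^ 3 / qPochInf q q ^ 3 =
      (3 * (qPochInf (q ^ 3) (q ^ 3) ^ 3 / qPochInf q q) +
        3 * (qPochInf (q ^ 3) (q ^ 3) ^ 3 / qPochInf q q)) / qPochInf q q / qPochInf q q := by
    field_simp
    ring
  rw [h_value]
  exact h_outer

lemma zpow_div_qPoch_eq_durfeeTerm_mul (hq0 : q ≠ 0) (i j k l : ℕ) :
    q ^ ((i : ℤ) ^ 2 + (j : ℤ) ^ 2 + (k : ℤ) ^ 2 + (l : ℤ) ^ 2 - i * j - i * k - i * l + j * k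
        + j * l + i - j - k - l) / (qPoch q q i * qPoch q q j * qPoch q q k * qPoch q q l) =
      durfeeTerm q (i, j) * (durfeeTerm q (k, l) * q ^ (-(l : ℤ)) *
        q ^ hexagonalExponent (k - l, i - j - k)) := by
  have h_exponent : (i : ℤ) ^ 2 + (j : ℤ) ^ 2 + (k : ℤ) ^ 2 + (l : ℤ) ^ 2 - i * j - i * k - i * l
      + j * k + j * l + i - j - k - l =
      (i * j : ℕ) + ((k * l : ℕ) + -(l : ℤ) + hexagonalExponent (k - l, i - j - k)) := by
    rw [hexagonalExponent]
    push_cast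
    ring
  simp only [h_exponent, zpow_add₀ hq0, zpow_natCast, durfeeTerm]
  ring

end QuadrupleSum

theorem stmt_13 (q : ℂ) (h0 : 0 < ‖q‖) (h1 : ‖q‖ < 1) :
    (∑' p : ℕ × ℕ × ℕ × ℕ,
      (fun (i j k l : ℕ) =>
        q ^ (((i:ℤ)^2 + (j:ℤ)^2 + (k:ℤ)^2 + (l:ℤ)^2 - (i:ℤ)*(j:ℤ) - (i:ℤ)*(k:ℤ) - (i:ℤ)*(l:ℤ) + (j:ℤ)*(k:ℤ) + (j:ℤ)*(l:ℤ) + (i:ℤ) - (j:ℤ) - (k:ℤ) - (l:ℤ)) : ℤ) /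
          (qPoch (q ^ 1) (q ^ 1) i * qPoch (q ^ 1) (q ^ 1) j * qPoch (q ^ 1) (q ^ 1) k * qPoch (q ^ 1) (q ^ 1) l))
        p.1 p.2.1 p.2.2.1 p.2.2.2)
    = 6 * (J q 3)^3 / (J q 1)^3 := by
  have hq0 : q ≠ 0 := norm_pos_iff.1 h0
  have h_sum := (Equiv.prodAssoc ℕ ℕ (ℕ × ℕ)).symm.hasSum_iff.2
    (hasSum_durfeeTerm_mul_durfeeTerm_mul_zpow hq0 h1)
  simp only [J, pow_one, zpow_div_qPoch_eq_durfeeTerm_mul hq0]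
  exact h_sum.tsum_eq
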